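/- Let G be a finite group, let (σ_j)_{j∈J} be a complete family of irreducibles for G, let k ≥ 1, let ρ be a unitary representation of G^k on a finite-dimensional complex inner product space V, and let M ⊆ G be a conjugacy class of involutions with representative m₀. Then for every b ∈ V, (1/|M|) Σ_{m∈M} ‖Π_m b‖⁴ = 4^{-k} Σ_{I₁ ⊆ {1,…,k}} Σ_{I₂ ⊆ {1,…,k}} E^{I₁,I₂}(b), where Π_m = 2^{-k} Σ_{I ⊆ {1,…,k}} ρ(m^I). -/

import Mathlib

noncomputable section

open scoped BigOperators InnerProductSpace

def IsUnitaryRep {G V : Type*} [Group G] [NormedAddCommGroup V] [InnerProductSpace ℂ V]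
    (ρ : Representation ℂ G V) : Prop :=
  ∀ (g : G) (v w : V), ⟪ρ g v, ρ g w⟫_ℂ = ⟪v, w⟫_ℂ

def IsIrreducibleRep {G V : Type*} [Group G] [AddCommGroup V] [Module ℂ V]
    (ρ : Representation ℂ G V) : Prop :=
  (∃ v : V, v ≠ 0) ∧
    ∀ W : Submodule ℂ V, (∀ (g : G) (v : V), v ∈ W → ρ g v ∈ W) → W = ⊥ ∨ W = ⊤

def RepIso {G V₁ V₂ : Type*} [Group G] [AddCommGroup V₁] [Module ℂ V₁]
    [AddCommGroup V₂] [Module ℂ V₂]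
    (ρ₁ : Representation ℂ G V₁) (ρ₂ : Representation ℂ G V₂) : Prop :=
  ∃ e : V₁ ≃ₗ[ℂ] V₂, ∀ (g : G) (v : V₁), e (ρ₁ g v) = ρ₂ g (e v)

def repChar {G V : Type*} [Group G] [AddCommGroup V] [Module ℂ V]
    (ρ : Representation ℂ G V) (g : G) : ℂ := LinearMap.trace ℂ V (ρ g)

def IsCompleteFamily {G : Type*} [Group G] {J : Type*}
    (W : J → Type*) [∀ j, NormedAddCommGroup (W j)] [∀ j, InnerProductSpace ℂ (W j)]
    [∀ j, FiniteDimensional ℂ (W j)]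
    (σ : ∀ j, Representation ℂ G (W j)) : Prop :=
  (∀ j, IsUnitaryRep (σ j)) ∧ (∀ j, IsIrreducibleRep (σ j)) ∧
    (∀ j j', j ≠ j' → ¬ RepIso (σ j) (σ j')) ∧
    (∀ (U : Type) [AddCommGroup U] [Module ℂ U] [FiniteDimensional ℂ U]
      (τ : Representation ℂ G U), IsIrreducibleRep τ → ∃ j, RepIso τ (σ j))

def isoProj {G V : Type*} [Group G] [Fintype G] [AddCommGroup V] [Module ℂ V]
    (d : ℕ) (χ : G → ℂ) (ρ : Representation ℂ G V) : V →ₗ[ℂ] V :=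
  ((d : ℂ) / (Fintype.card G : ℂ)) • ∑ g : G, starRingEnd ℂ (χ g) • (ρ g : V →ₗ[ℂ] V)

def onI {G : Type*} [One G] {k : ℕ} (g : G) (I : Finset (Fin k)) : Fin k → G :=
  fun i => if i ∈ I then g else 1

def invProj {G V : Type*} [Group G] [AddCommGroup V] [Module ℂ V] {k : ℕ}
    (ρ : Representation ℂ (Fin k → G) V) (m : G) : V →ₗ[ℂ] V :=
  ((2 : ℂ) ^ k)⁻¹ • ∑ I : Finset (Fin k), (ρ (onI m I) : V →ₗ[ℂ] V)

def isoProjI {G V : Type*} [Group G] [Fintype G] [AddCommGroup V] [Module ℂ V] {k : ℕ}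
    (ρ : Representation ℂ (Fin k → G) V) (d : ℕ) (χ : G → ℂ) (I : Finset (Fin k)) :
    V →ₗ[ℂ] V :=
  ((d : ℂ) / (Fintype.card G : ℂ)) • ∑ g : G, starRingEnd ℂ (χ g) • (ρ (onI g I) : V →ₗ[ℂ] V)


theorem aux_irr {G V : Type*} [Group G] [AddCommGroup V] [Module ℂ V]
    (ρ : Representation ℂ G V) (h : IsIrreducibleRep ρ) : ρ.IsIrreducible := by
  obtain ⟨⟨v, hv⟩, h⟩ := h
  have : Nontrivial (Subrepresentation ρ) := by
    refine ⟨⊥, ⊤, fun e => hv ?_⟩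
    have e' : (⊥ : Submodule ℂ V) = ⊤ := congrArg Subrepresentation.toSubmodule e
    have : v ∈ (⊤ : Submodule ℂ V) := trivial
    rw [← e'] at this
    simpa using this
  refine { eq_bot_or_eq_top := fun W => ?_ }
  rcases h W.toSubmodule (fun g v hv => W.apply_mem_toSubmodule g hv) with h | h
  · left; exact Subrepresentation.toSubmodule_injective h
  · right; exact Subrepresentation.toSubmodule_injective h

theorem aux_conj {G V : Type*} [Group G] [NormedAddCommGroup V] [InnerProductSpace ℂ V]
    [FiniteDimensional ℂ V]
    (ρ : Representation ℂ G V) (h : IsUnitaryRep ρ) (g : G) :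
    starRingEnd ℂ (repChar ρ g) = repChar ρ g⁻¹ := by
  unfold repChar
  rw [LinearMap.trace_eq_sum_inner _ (stdOrthonormalBasis ℂ V),
    LinearMap.trace_eq_sum_inner _ (stdOrthonormalBasis ℂ V), map_sum]
  refine Finset.sum_congr rfl fun i _ => ?_
  rw [inner_conj_symm, ← h g _ (ρ g⁻¹ _)]
  simp

/-- the operator `Σ f(g) τ(g)`. -/
def auxT {G V : Type*} [Group G] [Fintype G] [AddCommGroup V] [Module ℂ V]
    (f : G → ℂ) (τ : Representation ℂ G V) : V →ₗ[ℂ] V := ∑ g : G, f g • (τ g : V →ₗ[ℂ] V)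

theorem auxT_apply {G V : Type*} [Group G] [Fintype G] [AddCommGroup V] [Module ℂ V]
    (f : G → ℂ) (τ : Representation ℂ G V) (v : V) : auxT f τ v = ∑ g : G, f g • τ g v := by
  simp [auxT]

theorem auxT_irr {G V : Type*} [Group G] [Fintype G] [AddCommGroup V] [Module ℂ V]
    [FiniteDimensional ℂ V]
    (f : G → ℂ) (hf : ∀ g h, f (h * g * h⁻¹) = f g) (τ : Representation ℂ G V)
    (hτ : IsIrreducibleRep τ)
    (h0 : ∑ g : G, f g * repChar τ g = 0) : auxT f τ = 0 := by
  have := aux_irr τ hτ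
  have hcomm : ∀ (g : G) (v : V), auxT f τ (τ g v) = τ g (auxT f τ v) := by
    intro g v
    rw [auxT_apply, auxT_apply, map_sum]
    rw [← Equiv.sum_comp (MulAut.conj g).toEquiv]
    refine Finset.sum_congr rfl fun x _ => ?_
    simp only [MulEquiv.toEquiv_eq_coe, MulEquiv.coe_toEquiv, MulAut.conj_apply, hf, map_smul]
    simp only [← Module.End.mul_apply, ← map_mul]
    simp
  obtain ⟨c, hc⟩ := (Representation.IsIrreducible.algebraMap_intertwiningMap_bijective_of_isAlgClosed
    (ρ := τ)).2 ((auxT f τ).intertwiningMap_of_isIntertwiningMap τ τ hcomm)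
  have hc' : auxT f τ = c • LinearMap.id := by
    ext v
    have := congrArg (fun F => F v) hc
    exact this.symm
  have htr : LinearMap.trace ℂ V (auxT f τ) = 0 := by
    rw [← h0]; simp [auxT, repChar]
  rw [hc'] at htr
  have : Nontrivial V := ⟨hτ.1.choose, 0, hτ.1.choose_spec⟩
  have hd : (Module.finrank ℂ V : ℂ) ≠ 0 := by
    exact_mod_cast Module.finrank_pos.ne'
  simp [hd] at htr
  rw [hc', htr, zero_smul]

theorem auxT_all {G : Type*} [Group G] [Fintype G]
    (f : G → ℂ) (h : ∀ (U : Type) [AddCommGroup U] [Module ℂ U] [FiniteDimensional ℂ U]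
      (τ : Representation ℂ G U), IsIrreducibleRep τ → auxT f τ = 0) (n : ℕ) :
    ∀ (U : Type) [AddCommGroup U] [Module ℂ U] [FiniteDimensional ℂ U]
      (τ : Representation ℂ G U), Module.finrank ℂ U = n → auxT f τ = 0 := by
  induction n using Nat.strong_induction_on with
  | _ n ih =>
  intro U _ _ _ τ hn
  by_cases hτ : IsIrreducibleRep τ
  · exact h U τ hτ
  by_cases hU : ∃ v : U, v ≠ 0
  swap
  · push Not at hU
    ext v
    rw [hU v]; simp
  have : ∃ W : Subrepresentation τ, W.toSubmodule ≠ ⊥ ∧ W.toSubmodule ≠ ⊤ := by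
    by_contra hcon
    push Not at hcon
    refine hτ ⟨hU, fun W hW => ?_⟩
    by_cases hb : W = ⊥
    · exact Or.inl hb
    · exact Or.inr (hcon ⟨W, fun g v hv => hW g v hv⟩ hb)
  obtain ⟨W, hWb, hWt⟩ := this
  have key : ∀ W : Subrepresentation τ, W.toSubmodule ≠ ⊤ → ∀ w ∈ W.toSubmodule, auxT f τ w = 0 := by
    intro W hW w hw
    have hlt : Module.finrank ℂ W.toSubmodule < n := by
      rw [← hn]; exact Submodule.finrank_lt hW
    have := ih _ hlt W.toSubmodule W.toRepresentation rfl
    have h2 := congrArg (fun F => ((F ⟨w, hw⟩ : W.toSubmodule) : U)) this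
    simp only [auxT_apply] at h2
    rw [auxT_apply]
    simpa [Subrepresentation.toRepresentation] using h2
  have : NeZero (Nat.card G : ℂ) := ⟨by exact_mod_cast Nat.card_pos.ne'⟩
  have hss : Representation.IsSemisimpleRepresentation τ := inferInstance
  obtain ⟨W', hW'⟩ := hss.exists_isCompl W
  have hsup : W.toSubmodule ⊔ W'.toSubmodule = ⊤ :=
    congrArg Subrepresentation.toSubmodule hW'.sup_eq_top
  have hinf : W.toSubmodule ⊓ W'.toSubmodule = ⊥ :=
    congrArg Subrepresentation.toSubmodule hW'.inf_eq_bot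
  have hW't : W'.toSubmodule ≠ ⊤ := by
    intro e
    rw [e, inf_top_eq] at hinf
    exact hWb hinf
  ext v
  have hv : v ∈ W.toSubmodule ⊔ W'.toSubmodule := hsup ▸ trivial
  obtain ⟨a, ha, b, hb, rfl⟩ := Submodule.mem_sup.1 hv
  rw [map_add, key W hWt a ha, key W' hW't b hb]
  simp

/-- a copy of the regular representation living in `Type`. -/
def auxReg (G : Type*) [Group G] [Fintype G] :
    Representation ℂ G (Fin (Fintype.card G) → ℂ) where
  toFun g := LinearMap.funLeft ℂ ℂ
    (fun i => Fintype.equivFin G (g⁻¹ * (Fintype.equivFin G).symm i))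
  map_one' := by ext; simp [LinearMap.funLeft]
  map_mul' x y := by ext; simp [LinearMap.funLeft, mul_assoc]

theorem aux_f_zero {G : Type*} [Group G] [Fintype G]
    (f : G → ℂ) (h : ∀ (U : Type) [AddCommGroup U] [Module ℂ U] [FiniteDimensional ℂ U]
      (τ : Representation ℂ G U), IsIrreducibleRep τ → auxT f τ = 0) (x : G) : f x = 0 := by
  classical
  have h1 := auxT_all f h _ _ (auxReg G) rfl
  have h2 := congrFun (congrArg (fun F => F (Pi.single (Fintype.equivFin G 1) 1)) h1)
    (Fintype.equivFin G x)
  simp only [auxT_apply] at h2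
  rw [Finset.sum_apply, Finset.sum_eq_single x] at h2
  · simpa [auxReg] using h2
  · intro g _ hg
    have : g⁻¹ * x ≠ 1 := by
      intro e; exact hg (inv_mul_eq_one.1 e)
    simp [auxReg, this]
  · simp

theorem aux_char_conj {G V : Type*} [Group G] [AddCommGroup V] [Module ℂ V]
    [FiniteDimensional ℂ V] (ρ : Representation ℂ G V) (g h : G) :
    repChar ρ (h * g * h⁻¹) = repChar ρ g := ρ.char_conj g h

theorem aux_orth {G : Type*} [Group G] [Fintype G]
    {J : Type*} 
    (W : J → Type*) [∀ j, NormedAddCommGroup (W j)] [∀ j, InnerProductSpace ℂ (W j)]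
    [∀ j, FiniteDimensional ℂ (W j)]
    (σ : ∀ j, Representation ℂ G (W j)) (hfam : IsCompleteFamily W σ) [DecidableEq J] (i j : J) :
    ∑ g : G, repChar (σ i) g * repChar (σ j) g⁻¹ =
      if i = j then (Fintype.card G : ℂ) else 0 := by
  classical
  have hi := aux_irr _ (hfam.2.1 i)
  have hj := aux_irr _ (hfam.2.1 j)
  have hc : (Nat.card G : ℂ) ≠ 0 := by exact_mod_cast Nat.card_pos.ne'
  have : Invertible (Nat.card G : ℂ) := invertibleOfNonzero hc
  have := Representation.char_orthonormal (σ i) (σ j)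
  rw [inv_mul_eq_iff_eq_mul₀ hc] at this
  change ∑ g : G, repChar (σ i) g * repChar (σ j) g⁻¹ = _ at this
  rw [this]
  by_cases hij : i = j
  · subst hij
    have : Nonempty ((σ i).Equiv (σ i)) := ⟨Representation.Equiv.refl _⟩
    simp [this]
  · have : ¬ Nonempty ((σ j).Equiv (σ i)) := by
      rintro ⟨e⟩
      refine hfam.2.2.1 j i (Ne.symm hij) ⟨e.toLinearEquiv, fun g v => ?_⟩
      exact congrArg (fun F => F v) (e.isIntertwining' g)
    simp [this, hij]

theorem aux_col {G : Type*} [Group G] [Fintype G]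
    {J : Type*} [Fintype J]
    (W : J → Type*) [∀ j, NormedAddCommGroup (W j)] [∀ j, InnerProductSpace ℂ (W j)]
    [∀ j, FiniteDimensional ℂ (W j)]
    (σ : ∀ j, Representation ℂ G (W j)) (hfam : IsCompleteFamily W σ)
    (M : Finset G) (m₀ : G) (hm₀M : m₀ ∈ M)
    (hM : ∀ m : G, m ∈ M ↔ IsConj m₀ m) [DecidableEq G] (x : G) :
    ∑ j, repChar (σ j) m₀ * starRingEnd ℂ (repChar (σ j) x) =
      (Fintype.card G : ℂ) / (M.card : ℂ) * if x ∈ M then 1 else 0 := by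
  classical
  have hMc : (M.card : ℂ) ≠ 0 := by exact_mod_cast Finset.card_ne_zero_of_mem hm₀M
  set f : G → ℂ := fun x => ∑ j, repChar (σ j) m₀ * starRingEnd ℂ (repChar (σ j) x) -
      (Fintype.card G : ℂ) / (M.card : ℂ) * if x ∈ M then 1 else 0 with hfdef
  have hf : ∀ g h, f (h * g * h⁻¹) = f g := by
    intro g h
    have : h * g * h⁻¹ ∈ M ↔ g ∈ M := by
      rw [hM, hM]
      have hg : IsConj g (h * g * h⁻¹) := isConj_iff.2 ⟨h, rfl⟩
      exact ⟨fun a => a.trans hg.symm, fun a => a.trans hg⟩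
    simp only [hfdef, aux_char_conj, this]
  have hzero : ∀ i, ∑ g : G, f g * repChar (σ i) g = 0 := by
    intro i
    have e1 : ∑ g : G, (∑ j, repChar (σ j) m₀ * starRingEnd ℂ (repChar (σ j) g)) * repChar (σ i) g
        = Fintype.card G * repChar (σ i) m₀ := by
      simp_rw [Finset.sum_mul]
      rw [Finset.sum_comm]
      have : ∀ j, ∑ g : G, repChar (σ j) m₀ * starRingEnd ℂ (repChar (σ j) g) * repChar (σ i) g
          = repChar (σ j) m₀ * if i = j then (Fintype.card G : ℂ) else 0 := by
        intro j
        rw [← aux_orth W σ hfam, Finset.mul_sum]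
        refine Finset.sum_congr rfl fun g _ => ?_
        rw [aux_conj _ (hfam.1 j)]; ring
      simp only [this]
      simp [mul_comm]
    have e2 : ∑ g : G, ((Fintype.card G : ℂ) / (M.card : ℂ) * if g ∈ M then 1 else 0) *
        repChar (σ i) g = Fintype.card G * repChar (σ i) m₀ := by
      have : ∀ g : G, ((Fintype.card G : ℂ) / (M.card : ℂ) * if g ∈ M then 1 else 0) *
        repChar (σ i) g = if g ∈ M then
          (Fintype.card G : ℂ) / (M.card : ℂ) * repChar (σ i) m₀ else 0 := by
        intro g
        by_cases hg : g ∈ M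
        · obtain ⟨c, rfl⟩ := isConj_iff.1 ((hM g).1 hg)
          simp [hg, aux_char_conj]
        · simp [hg]
      simp_rw [this]
      rw [Finset.sum_ite_mem]
      simp
      field_simp
    simp only [hfdef, sub_mul, Finset.sum_sub_distrib, e1, e2, sub_self]
  have hall := aux_f_zero f (fun U _ _ _ τ hτ => by
    obtain ⟨j, e, he⟩ := hfam.2.2.2 U τ hτ
    refine auxT_irr f hf τ hτ ?_
    rw [← hzero j]
    refine Finset.sum_congr rfl fun g _ => ?_
    congr 1
    unfold repChar
    rw [← LinearMap.trace_conj' _ e]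
    congr 1
    ext v
    simp [LinearEquiv.conj_apply, he]) x
  exact sub_eq_zero.1 hall

theorem aux_onI_mul {G : Type*} [Group G] {k : ℕ} (m : G) (hm : m * m = 1) (I I' : Finset (Fin k)) :
    onI m I * onI m I' = onI m (symmDiff I I') := by
  ext i
  by_cases h1 : i ∈ I <;> by_cases h2 : i ∈ I' <;> simp [onI, h1, h2, Finset.mem_symmDiff, hm]

theorem aux_norm {G : Type*} [Group G] {k : ℕ}
    {V : Type*} [NormedAddCommGroup V] [InnerProductSpace ℂ V]
    (ρ : Representation ℂ (Fin k → G) V) (hρu : IsUnitaryRep ρ) (m : G) (hm : m * m = 1) (b : V) :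
    (‖invProj ρ m b‖ : ℂ) ^ 2 = ((2 : ℂ) ^ k)⁻¹ * ∑ I : Finset (Fin k), ⟪b, ρ (onI m I) b⟫_ℂ := by
  have hin : ∀ I I' : Finset (Fin k), ⟪ρ (onI m I) b, ρ (onI m I') b⟫_ℂ
      = ⟪b, ρ (onI m (symmDiff I I')) b⟫_ℂ := by
    intro I I'
    rw [← aux_onI_mul m hm, map_mul, Module.End.mul_apply, ← hρu (onI m I) b]
    rw [← Module.End.mul_apply, ← map_mul, aux_onI_mul m hm I I]
    have : onI m (symmDiff I I) = 1 := by ext i; simp [onI]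
    rw [this]; simp
  have hrow : ∀ I : Finset (Fin k), ∑ I' : Finset (Fin k), ⟪ρ (onI m I) b, ρ (onI m I') b⟫_ℂ
      = ∑ I : Finset (Fin k), ⟪b, ρ (onI m I) b⟫_ℂ := by
    intro I
    simp_rw [hin]
    have hinvol : Function.Involutive (fun I' : Finset (Fin k) => symmDiff I I') := by
      intro I'; simp
    exact Equiv.sum_comp hinvol.toPerm (fun I => ⟪b, ρ (onI m I) b⟫_ℂ)
  have := inner_self_eq_norm_sq_to_K (𝕜 := ℂ) (invProj ρ m b)
  refine this.symm.trans ?_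
  have hb : invProj ρ m b = ((2 : ℂ) ^ k)⁻¹ • ∑ I : Finset (Fin k), ρ (onI m I) b := by
    simp [invProj]
  rw [hb, inner_smul_left, inner_smul_right, sum_inner]
  simp_rw [inner_sum, hrow]
  simp
  left
  rw [Complex.conj_ofNat]

/-- Multiregister second moment: the average over `m ∈ M` of `‖Π_m b‖⁴` equals
`4^{-k} Σ_{I₁,I₂⊆[k]} E^{I₁,I₂}(b)` where
`E^{I₁,I₂}(b) = Σ_j (χ_j(m₀)/d_j) (d_j/|G|) Σ_g conj(χ_j(g)) ⟪b,ρ(g^{I₁})b⟫ conj(⟪b,ρ(g^{I₂})b⟫)`. -/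
theorem stmt7 {G : Type*} [Group G] [Fintype G]
    {J : Type*} [Fintype J]
    (W : J → Type*) [∀ j, NormedAddCommGroup (W j)] [∀ j, InnerProductSpace ℂ (W j)]
    [∀ j, FiniteDimensional ℂ (W j)]
    (σ : ∀ j, Representation ℂ G (W j)) (hfam : IsCompleteFamily W σ)
    {k : ℕ} (hk : 1 ≤ k)
    {V : Type*} [NormedAddCommGroup V] [InnerProductSpace ℂ V] [FiniteDimensional ℂ V]
    (ρ : Representation ℂ (Fin k → G) V) (hρu : IsUnitaryRep ρ)
    (M : Finset G) (m₀ : G) (hm₀M : m₀ ∈ M)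
    (hM : ∀ m : G, m ∈ M ↔ IsConj m₀ m)
    (hinv : ∀ m ∈ M, m * m = 1 ∧ m ≠ 1)
    (b : V) :
    (1 / (M.card : ℂ)) * ∑ m ∈ M, (‖invProj ρ m b‖ : ℂ) ^ 4
      = ((4 : ℂ) ^ k)⁻¹ * ∑ I₁ : Finset (Fin k), ∑ I₂ : Finset (Fin k),
          ∑ j, repChar (σ j) m₀ / (Module.finrank ℂ (W j) : ℂ) *
            ((Module.finrank ℂ (W j) : ℂ) / (Fintype.card G : ℂ) *
              ∑ g : G, starRingEnd ℂ (repChar (σ j) g) *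
                (⟪b, ρ (onI g I₁) b⟫_ℂ * starRingEnd ℂ ⟪b, ρ (onI g I₂) b⟫_ℂ)) := by
  classical
  have hG : (Fintype.card G : ℂ) ≠ 0 := by exact_mod_cast Fintype.card_ne_zero
  have hMc : (M.card : ℂ) ≠ 0 := by exact_mod_cast Finset.card_ne_zero_of_mem hm₀M
  have hd : ∀ j, (Module.finrank ℂ (W j) : ℂ) ≠ 0 := by
    intro j
    have : Nontrivial (W j) := ⟨(hfam.2.1 j).1.choose, 0, (hfam.2.1 j).1.choose_spec⟩
    exact_mod_cast Module.finrank_pos.ne'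
  have hE : ∀ F : G → ℂ, ∑ j, repChar (σ j) m₀ / (Module.finrank ℂ (W j) : ℂ) *
            ((Module.finrank ℂ (W j) : ℂ) / (Fintype.card G : ℂ) *
              ∑ g : G, starRingEnd ℂ (repChar (σ j) g) * F g)
      = 1 / (M.card : ℂ) * ∑ m ∈ M, F m := by
    intro F
    have h1 : ∀ j, repChar (σ j) m₀ / (Module.finrank ℂ (W j) : ℂ) *
            ((Module.finrank ℂ (W j) : ℂ) / (Fintype.card G : ℂ) *
              ∑ g : G, starRingEnd ℂ (repChar (σ j) g) * F g)
        = ∑ g : G, repChar (σ j) m₀ * starRingEnd ℂ (repChar (σ j) g) *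
            (F g / (Fintype.card G : ℂ)) := by
      intro j
      have := hd j
      rw [Finset.mul_sum, Finset.mul_sum]
      refine Finset.sum_congr rfl fun g _ => ?_
      field_simp
    simp_rw [h1]
    rw [Finset.sum_comm]
    simp_rw [← Finset.sum_mul, aux_col W σ hfam M m₀ hm₀M hM]
    rw [Finset.mul_sum, ← Finset.sum_subset (Finset.subset_univ M)]
    · refine Finset.sum_congr rfl fun g hg => ?_
      simp only [hg, if_true]
      field_simp
    · intro g _ hg
      simp [hg]
  have hN : ∀ m ∈ M, (‖invProj ρ m b‖ : ℂ) ^ 4 = ((4 : ℂ) ^ k)⁻¹ *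
      ∑ I₁ : Finset (Fin k), ∑ I₂ : Finset (Fin k),
        (⟪b, ρ (onI m I₁) b⟫_ℂ * starRingEnd ℂ ⟪b, ρ (onI m I₂) b⟫_ℂ) := by
    intro m hm
    have h2 := aux_norm ρ hρu m (hinv m hm).1 b
    have h3 := congrArg (starRingEnd ℂ) h2
    simp only [map_pow, Complex.conj_ofReal, map_mul, map_inv₀, map_ofNat, map_sum] at h3
    have h4 : (‖invProj ρ m b‖ : ℂ) ^ 4 = (‖invProj ρ m b‖ : ℂ) ^ 2 * (‖invProj ρ m b‖ : ℂ) ^ 2 := by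
      ring
    rw [h4]
    nth_rewrite 1 [h2]
    rw [h3, ← Finset.sum_mul_sum]
    have : (4 : ℂ) ^ k = 2 ^ k * 2 ^ k := by rw [← mul_pow]; norm_num
    rw [this, mul_inv]
    ring
  simp_rw [hE]
  rw [Finset.sum_congr rfl hN]
  have hsw : ∀ F : G → Finset (Fin k) → Finset (Fin k) → ℂ,
      ∑ m ∈ M, ∑ I₁, ∑ I₂, F m I₁ I₂ = ∑ I₁, ∑ I₂, ∑ m ∈ M, F m I₁ I₂ := by
    intro F
    rw [Finset.sum_comm]
    exact Finset.sum_congr rfl fun I _ => Finset.sum_comm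
  simp_rw [← Finset.mul_sum]
  rw [← hsw]
  simp_rw [← Finset.mul_sum]
  ring
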